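/- (a) For every family of integers (a_p), indexed by the primes, with 0 ≤ a_p < p, and every set P of primes with ∑_{p∈P} (log p)/p < ∞, for Lebesgue-almost every y ∈ [0,1] the exponential averages (1/p) ∑_{0 ≤ n < p} e(n(y − a_p/p)) converge to 0 as p → ∞ along P. (b) There exists a family of integers (a_p) with 0 ≤ a_p < p such that for Lebesgue-almost every y ∈ [0,1], limsup_p | (1/p) ∑_{0 ≤ n < p} e(n(y − a_p/p)) | ≥ 1/2, where p ranges over all primes; in particular, these averages do not converge to 0 almost everywhere along the full sequence of primes. -/

import Mathlib

open Filter MeasureTheory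

/-- `e(z) = exp(2πiz)`. -/
noncomputable def e (z : ℝ) : ℂ := Complex.exp (2 * Real.pi * Complex.I * z)

lemma e_add (x y : ℝ) : e (x + y) = e x * e y := by
  unfold e; rw [← Complex.exp_add]; congr 1; push_cast; ring

lemma e_eq (x : ℝ) : e x = Complex.exp (Complex.I * ((2 * Real.pi * x : ℝ) : ℂ)) := by
  unfold e; congr 1; push_cast; ring

lemma e_int (k : ℤ) : e k = 1 := by
  unfold e
  rw [Complex.exp_eq_one_iff]
  exact ⟨k, by push_cast; ring⟩

lemma norm_e (x : ℝ) : ‖e x‖ = 1 := by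
  rw [e_eq, mul_comm]; exact Complex.norm_exp_ofReal_mul_I _

lemma e_nat_mul (n : ℕ) (x : ℝ) : e (n * x) = e x ^ n := by
  unfold e; rw [← Complex.exp_nat_mul]; congr 1; push_cast; ring

lemma norm_e_sub_one (x : ℝ) : ‖e x - 1‖ = 2 * |Real.sin (Real.pi * x)| := by
  rw [e_eq, Complex.norm_exp_I_mul_ofReal_sub_one]
  rw [norm_mul, Real.norm_eq_abs, Real.norm_eq_abs, abs_of_pos (by norm_num : (0:ℝ) < 2)]
  congr 3; ring

lemma continuous_e : Continuous e := by unfold e; fun_prop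

lemma conj_e (x : ℝ) : (starRingEnd ℂ) (e x) = e (-x) := by
  unfold e; rw [← Complex.exp_conj]; congr 1; simp; left; exact Complex.conj_ofNat 2

/-- The average. -/
noncomputable def avg (p : ℕ) (b y : ℝ) : ℂ :=
  (p : ℂ)⁻¹ * ∑ n ∈ Finset.range p, e ((n : ℝ) * (y - b))

lemma continuous_avg (p : ℕ) (b : ℝ) : Continuous (avg p b) := by
  unfold avg
  refine continuous_const.mul (continuous_finsetSum _ fun n _ => continuous_e.comp ?_)
  fun_prop

lemma norm_avg_le (p : ℕ) (b y : ℝ) : ‖avg p b y‖ ≤ 1 := by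
  unfold avg
  have h : ‖∑ n ∈ Finset.range p, e ((n : ℝ) * (y - b))‖ ≤ p := by
    refine (norm_sum_le _ _).trans ?_
    simp [norm_e]
  rw [norm_mul, norm_inv, Complex.norm_natCast]
  calc (p:ℝ)⁻¹ * _ ≤ (p:ℝ)⁻¹ * p := by gcongr
    _ ≤ 1 := inv_mul_le_one

lemma integral_e (k : ℤ) (b : ℝ) :
    ∫ y in (0:ℝ)..1, e (k * (y - b)) = if k = 0 then 1 else 0 := by
  split_ifs with h
  · subst h; simp [e]
  · have h1 : ∀ y : ℝ, e (k * (y - b)) = e (-(k * b)) *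
        Complex.exp ((2 * Real.pi * Complex.I * k) * y) := by
      intro y; unfold e; rw [← Complex.exp_add]; congr 1; push_cast; ring
    have hc : (2 * Real.pi * Complex.I * k : ℂ) ≠ 0 := by
      simp [Real.pi_ne_zero, h]
    simp_rw [h1]
    rw [intervalIntegral.integral_const_mul, integral_exp_mul_complex hc]
    have : Complex.exp (2 * Real.pi * Complex.I * k * ((1:ℝ):ℂ)) = 1 := by
      rw [Complex.exp_eq_one_iff]; exact ⟨k, by push_cast; ring⟩
    rw [this]; simp

lemma integral_avg (p : ℕ) (hp : 0 < p) (b : ℝ) :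
    ∫ y in (0:ℝ)..1, ‖avg p b y‖ ^ 2 = 1 / p := by
  have hp' : (p:ℂ) ≠ 0 := by exact_mod_cast hp.ne'
  have key : ∀ y, ((‖avg p b y‖ ^ 2 : ℝ) : ℂ) = (p:ℂ)⁻¹ ^ 2 *
      ∑ n ∈ Finset.range p, ∑ m ∈ Finset.range p, e (((n - m : ℤ) : ℝ) * (y - b)) := by
    intro y
    push_cast
    rw [← Complex.mul_conj']
    unfold avg
    rw [map_mul, map_sum, map_inv₀, Complex.conj_natCast]
    rw [mul_mul_mul_comm, Finset.sum_mul_sum, sq]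
    congr 1
    refine Finset.sum_congr rfl fun n _ => Finset.sum_congr rfl fun m _ => ?_
    rw [conj_e, ← e_add]
    congr 1; push_cast; ring
  have h2 : ((∫ y in (0:ℝ)..1, ‖avg p b y‖ ^ 2 : ℝ) : ℂ) = ((1 / p : ℝ) : ℂ) := by
    rw [← intervalIntegral.integral_ofReal]
    simp_rw [key]
    have hi : ∀ n m : ℕ, IntervalIntegrable
        (fun y => e (((n - m : ℤ) : ℝ) * (y - b))) volume 0 1 := by
      intro n m
      apply Continuous.intervalIntegrable
      exact continuous_e.comp (by fun_prop)
    rw [intervalIntegral.integral_const_mul, intervalIntegral.integral_finsetSum]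
    · simp_rw [intervalIntegral.integral_finsetSum (fun m _ => hi _ m), integral_e]
      have : ∀ n ∈ Finset.range p, (∑ m ∈ Finset.range p,
          if ((n:ℤ) - m) = 0 then (1:ℂ) else 0) = 1 := by
        intro n hn
        simp_rw [sub_eq_zero, Nat.cast_inj]
        rw [Finset.sum_ite_eq, if_pos hn]
      rw [Finset.sum_congr rfl this]
      simp
      field_simp
    · intro n _
      apply Continuous.intervalIntegrable
      exact continuous_finsetSum _ fun m _ => continuous_e.comp (by fun_prop)
  exact_mod_cast h2

lemma part_a (a : ℕ → ℕ) (P : Set ℕ) (hP : ∀ p ∈ P, p.Prime)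
    (hs : Summable fun p : P => Real.log p / p) :
    ∀ᵐ y ∂(volume.restrict (Set.Icc (0:ℝ) 1)),
      Tendsto (fun p : ℕ => avg p ((a p : ℝ) / p) y) (atTop ⊓ 𝓟 P) (nhds 0) := by
  have hs1 : Summable fun p : P => (1:ℝ) / (p:ℕ) := by
    refine Summable.of_nonneg_of_le (fun _ => by positivity) ?_ (hs.mul_left (Real.log 2)⁻¹)
    intro p
    have h2 : (2:ℝ) ≤ (p:ℕ) := by exact_mod_cast (hP p p.2).two_le
    have hl : 0 < Real.log 2 := Real.log_pos (by norm_num)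
    have : 1 ≤ (Real.log 2)⁻¹ * Real.log (p:ℕ) := by
      rw [inv_mul_eq_div, one_le_div hl]
      exact Real.log_le_log (by norm_num) h2
    rw [← mul_div_assoc]
    gcongr
  let F : P → ℝ → ENNReal := fun p y => ENNReal.ofReal (‖avg p ((a p : ℝ) / (p:ℕ)) y‖ ^ 2)
  have hFc : ∀ p : P, Continuous fun y => ‖avg p ((a p : ℝ) / (p:ℕ)) y‖ ^ 2 :=
    fun p => (continuous_avg _ _).norm.pow 2
  have hF : ∀ p, Measurable (F p) := fun p => (hFc p).measurable.ennreal_ofReal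
  have hI : ∀ p, ∫⁻ y in Set.Icc (0:ℝ) 1, F p y = ENNReal.ofReal (1 / (p:ℕ)) := by
    intro p
    rw [← integral_avg p (hP p p.2).pos ((a p : ℝ) / (p:ℕ)),
      intervalIntegral.integral_of_le zero_le_one, ← integral_Icc_eq_integral_Ioc,
      ofReal_integral_eq_lintegral_ofReal]
    · exact (hFc p).continuousOn.integrableOn_Icc
    · exact Eventually.of_forall fun y => by positivity
  have hfin : ∫⁻ y in Set.Icc (0:ℝ) 1, ∑' p, F p y ≠ ⊤ := by
    rw [lintegral_tsum (fun p => (hF p).aemeasurable)]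
    simp_rw [hI]
    exact hs1.tsum_ofReal_ne_top
  have hae := ae_lt_top (Measurable.ennreal_tsum hF) hfin
  filter_upwards [hae] with y hy
  have h0 := ENNReal.tendsto_cofinite_zero_of_tsum_ne_top hy.ne
  have h1 : Tendsto (fun p : P => ‖avg p ((a p : ℝ) / (p:ℕ)) y‖ ^ 2) cofinite (nhds 0) := by
    have := (ENNReal.tendsto_toReal ENNReal.zero_ne_top).comp h0
    refine this.congr fun p => ?_
    simp only [F, Function.comp]
    exact ENNReal.toReal_ofReal (by positivity)
  have h2 : Tendsto (fun p : P => avg p ((a p : ℝ) / (p:ℕ)) y) cofinite (nhds 0) := by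
    rw [tendsto_zero_iff_norm_tendsto_zero]
    have := h1.sqrt
    simpa [Real.sqrt_sq] using this
  have h3 : atTop ⊓ 𝓟 P = map ((↑) : P → ℕ) cofinite := by
    rw [← Nat.cofinite_eq_atTop, ← Subtype.val_injective.comap_cofinite_eq,
      subtype_coe_map_comap]
  rw [h3, tendsto_map'_iff]
  exact h2

lemma half_le_sin {u : ℝ} (h0 : 0 ≤ u) (h1 : u ≤ 0.55 * Real.pi) : u / 2 ≤ Real.sin u := by
  have hpi := Real.pi_gt_three
  have hpi' := Real.pi_lt_d2
  rcases le_total u (Real.pi / 2) with h | h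
  · refine le_trans ?_ (Real.mul_le_sin h0 h)
    rw [div_mul_eq_mul_div, div_le_div_iff₀ (by norm_num) (by positivity)]
    nlinarith
  · have := Real.one_sub_sq_div_two_le_cos (x := u - Real.pi / 2)
    rw [Real.cos_sub_pi_div_two] at this
    have h3 : (u - Real.pi / 2) ≤ 0.16 := by norm_num at h1 ⊢; linarith
    have h4 : (u - Real.pi / 2) ^ 2 ≤ 0.16 ^ 2 := by gcongr
    norm_num at h1 h4
    nlinarith

lemma avg_ge (p : ℕ) (hp : 0 < p) (b y : ℝ) (h : |p * (y - b)| ≤ 0.55) :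
    1 / 2 ≤ ‖avg p b y‖ := by
  have hp' : (0:ℝ) < p := by exact_mod_cast hp
  set t := y - b with ht
  have hsum : ∑ n ∈ Finset.range p, e ((n : ℝ) * (y - b)) = ∑ n ∈ Finset.range p, e t ^ n :=
    Finset.sum_congr rfl fun n _ => by rw [← ht, e_nat_mul]
  unfold avg
  rw [hsum, norm_mul, norm_inv, Complex.norm_natCast]
  rcases eq_or_ne t 0 with h0 | h0
  · have : e 0 = 1 := by simp [e]
    rw [h0, this]; simp
    rw [inv_mul_cancel₀ hp'.ne']; norm_num
  have hg := congrArg norm (geom_sum_mul (e t) p)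
  rw [norm_mul, ← e_nat_mul, norm_e_sub_one, norm_e_sub_one] at hg
  set S := ‖∑ n ∈ Finset.range p, e t ^ n‖
  have hS : 0 ≤ S := norm_nonneg _
  have hpi := Real.pi_pos
  have h1 : |Real.sin (Real.pi * t)| ≤ Real.pi * |t| := by
    have := Real.abs_sin_le_abs (x := Real.pi * t)
    rwa [abs_mul, abs_of_pos hpi] at this
  have h2 : Real.pi * (p * |t|) / 2 ≤ |Real.sin (Real.pi * (p * t))| := by
    have e1 : |Real.pi * (p * t)| = Real.pi * (p * |t|) := by
      rw [abs_mul, abs_mul, abs_of_pos hpi, abs_of_pos hp']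
    have e2 : |p * t| = p * |t| := by rw [abs_mul, abs_of_pos hp']
    rw [e2] at h
    have h3 := half_le_sin (u := Real.pi * (p * |t|)) (by positivity) (by nlinarith)
    refine h3.trans ?_
    rw [← e1]
    rcases abs_choice (Real.pi * (p * t)) with h | h <;> rw [h]
    · exact le_abs_self _
    · rw [Real.sin_neg]; exact neg_le_abs _
  have ht0 : 0 < |t| := abs_pos.2 h0
  have h4 : Real.pi * |t| * (p / 2) ≤ Real.pi * |t| * S := by nlinarith
  have h5 := le_of_mul_le_mul_left h4 (by positivity)
  rw [inv_mul_eq_div, le_div_iff₀ hp']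
  linarith

lemma avg_shift (p : ℕ) (b y : ℝ) (k : ℤ) : avg p b y = avg p (b + k) y := by
  unfold avg
  congr 1
  refine Finset.sum_congr rfl fun n _ => ?_
  have : (n:ℝ) * (y - b) = n * (y - (b + k)) + ((n * k : ℤ) : ℝ) := by push_cast; ring
  rw [this, e_add, e_int, mul_one]

/-- The frontier. -/
noncomputable def fr (m : ℕ) : ℝ :=
  ∑ q ∈ Finset.range m, Set.indicator {p : ℕ | p.Prime} (fun n : ℕ => (1:ℝ) / n) q / 20

/-- Numerators. -/
noncomputable def anum (p : ℕ) : ℕ := ((round (p * fr p)) % (p : ℤ)).toNat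

lemma fr_tendsto : Tendsto fr atTop atTop := by
  have h := not_summable_one_div_on_primes
  have h' : ¬ Summable (fun q : ℕ =>
      Set.indicator {p : ℕ | p.Prime} (fun n : ℕ => (1:ℝ) / n) q / 20) := by
    intro hc; apply h
    refine (hc.mul_left 20).congr fun q => ?_
    ring
  exact (not_summable_iff_tendsto_nat_atTop_of_nonneg
    (fun n => div_nonneg (Set.indicator_nonneg (fun _ _ => by positivity) _) (by norm_num))).1 h'

lemma fr_mono : Monotone fr := by
  refine monotone_nat_of_le_succ fun n => ?_
  unfold fr
  rw [Finset.sum_range_succ]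
  have : 0 ≤ Set.indicator {p : ℕ | p.Prime} (fun n : ℕ => (1:ℝ) / n) n :=
    Set.indicator_nonneg (fun _ _ => by positivity) _
  linarith

lemma exists_prime (y : ℝ) (hy : 0 ≤ y) (N : ℕ) :
    ∃ p, N ≤ p ∧ p.Prime ∧ 1 / 2 ≤ ‖avg p ((anum p : ℝ) / p) y‖ := by
  obtain ⟨k, hk⟩ := exists_nat_gt (fr N)
  have hex : ∃ m, y + k < fr m := (fr_tendsto.eventually_gt_atTop _).exists
  classical
  obtain ⟨m, hm⟩ : ∃ m, m = Nat.find hex := ⟨_, rfl⟩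
  have h1 : y + k < fr m := hm ▸ Nat.find_spec hex
  have hNm : N < m := by
    by_contra hc
    have := fr_mono (not_lt.1 hc)
    linarith
  obtain ⟨p, rfl⟩ : ∃ p, m = p + 1 := ⟨m - 1, by omega⟩
  have h2 : fr p ≤ y + k := not_lt.1 (Nat.find_min hex (by omega))
  have hs : fr (p + 1) = fr p +
      Set.indicator {p : ℕ | p.Prime} (fun n : ℕ => (1:ℝ) / n) p / 20 := by
    unfold fr; rw [Finset.sum_range_succ]
  have hp : p.Prime := by
    by_contra hc
    rw [Set.indicator_of_notMem (by simpa using hc)] at hs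
    linarith
  rw [Set.indicator_of_mem (by simpa using hp)] at hs
  refine ⟨p, by omega, hp, ?_⟩
  have hp0 : (0:ℝ) < p := by exact_mod_cast hp.pos
  have hpz : (p:ℤ) ≠ 0 := by exact_mod_cast hp.ne_zero
  set r := round (p * fr p) with hr
  have ha : ((anum p : ℤ)) = r - p * (r / p) := by
    unfold anum
    rw [Int.toNat_of_nonneg (Int.emod_nonneg _ hpz), Int.emod_def]
  have ha' : (anum p : ℝ) = r - p * ((r / p : ℤ) : ℝ) := by exact_mod_cast ha
  rw [avg_shift p _ y (r / p - k)]
  apply avg_ge p hp.pos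
  have e1 : (p:ℝ) * (y - ((anum p : ℝ) / p + ((r / p - k : ℤ) : ℝ))) = p * (y + k) - r := by
    rw [ha']; push_cast; field_simp; ring
  rw [e1]
  have h3 := abs_le.1 (abs_sub_round (p * fr p))
  rw [← hr] at h3
  have h4 : (p:ℝ) * (y + k) ≤ p * fr p + 1 / 20 := by
    have : (p:ℝ) * (fr p + 1 / p / 20) = p * fr p + 1 / 20 := by field_simp
    rw [← this]; apply mul_le_mul_of_nonneg_left _ hp0.le; linarith
  have h5 : (p:ℝ) * fr p ≤ p * (y + k) := mul_le_mul_of_nonneg_left h2 hp0.le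
  rw [abs_le]; norm_num
  constructor <;> linarith [h3.1, h3.2]

lemma anum_lt (p : ℕ) (hp : p.Prime) : anum p < p := by
  have := Int.emod_lt_of_pos (round (p * fr p)) (by exact_mod_cast hp.pos : (0:ℤ) < p)
  have h2 := Int.emod_nonneg (round (p * fr p)) (by exact_mod_cast hp.ne_zero : (p:ℤ) ≠ 0)
  unfold anum; omega

lemma part_b (y : ℝ) (hy : 0 ≤ y) :
    (1/2 : ℝ) ≤ Filter.limsup (fun p : ℕ => ‖avg p ((anum p : ℝ) / p) y‖)
            (atTop ⊓ 𝓟 {p : ℕ | p.Prime}) ∧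
        ¬ Tendsto (fun p : ℕ => avg p ((anum p : ℝ) / p) y)
            (atTop ⊓ 𝓟 {p : ℕ | p.Prime}) (nhds 0) := by
  have hf : ∃ᶠ p in atTop ⊓ 𝓟 {p : ℕ | p.Prime}, 1 / 2 ≤ ‖avg p ((anum p : ℝ) / p) y‖ := by
    rw [frequently_inf_principal, frequently_atTop]
    intro N
    obtain ⟨p, h1, h2, h3⟩ := exists_prime y hy N
    exact ⟨p, h1, h2, h3⟩
  constructor
  · exact le_limsup_of_frequently_le hf
      (isBoundedUnder_of ⟨1, fun p => norm_avg_le _ _ _⟩)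
  · intro ht
    have h0 := (tendsto_zero_iff_norm_tendsto_zero.1 ht).eventually_lt_const
      (by norm_num : (0:ℝ) < 1 / 2)
    obtain ⟨p, h1, h2⟩ := (hf.and_eventually h0).exists
    linarith

/-- (a) For every family `(a_p)` with `0 ≤ a_p < p` and every set `P` of primes with
`∑_{p∈P} (log p)/p < ∞`, for almost every `y ∈ [0,1]` the averages
`(1/p) ∑_{0≤n<p} e(n(y - a_p/p))` tend to `0` along `P`.
(b) There is a family `(a_p)` with `0 ≤ a_p < p` such that for almost every `y ∈ [0,1]`
the limsup of the moduli of these averages along all primes is at least `1/2`; in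
particular they do not tend to `0` almost everywhere along the full sequence of primes. -/
theorem sparseness_needed_for_exponential_averages :
    (∀ a : ℕ → ℕ, (∀ p : ℕ, p.Prime → a p < p) →
      ∀ P : Set ℕ, (∀ p ∈ P, p.Prime) →
        (Summable fun p : P => Real.log p / p) →
        ∀ᵐ y ∂(volume.restrict (Set.Icc (0:ℝ) 1)),
          Tendsto
            (fun p : ℕ => (p : ℂ)⁻¹ *
              ∑ n ∈ Finset.range p, e ((n : ℝ) * (y - (a p : ℝ) / p)))
            (atTop ⊓ 𝓟 P) (nhds 0)) ∧
    (∃ a : ℕ → ℕ, (∀ p : ℕ, p.Prime → a p < p) ∧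
      ∀ᵐ y ∂(volume.restrict (Set.Icc (0:ℝ) 1)),
        (1/2 : ℝ) ≤
          Filter.limsup
            (fun p : ℕ =>
              ‖(p : ℂ)⁻¹ * ∑ n ∈ Finset.range p, e ((n : ℝ) * (y - (a p : ℝ) / p))‖)
            (atTop ⊓ 𝓟 {p : ℕ | p.Prime}) ∧
        ¬ Tendsto
            (fun p : ℕ => (p : ℂ)⁻¹ *
              ∑ n ∈ Finset.range p, e ((n : ℝ) * (y - (a p : ℝ) / p)))
            (atTop ⊓ 𝓟 {p : ℕ | p.Prime}) (nhds 0)) := by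
  refine ⟨fun a _ P hP hs => part_a a P hP hs, anum, anum_lt, ?_⟩
  filter_upwards [ae_restrict_mem measurableSet_Icc] with y hy
  exact part_b y hy.1
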